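/- arXiv:0705.1833 — 4 statements merged into one kernel-verified Lean document; each statement's English description precedes it below -/
import Mathlib

section
/- The transformation φ1 resolves the accessible singularity of the Garnier system and makes H1 polynomial: fix t, s ∈ ℂ with t, s ∉ {0,1} and t ≠ s; then there exists a polynomial P in four variables with complex coefficients such that for all complex (Q1,P1,Q2,P2) with Q1 ≠ 0, Q2 ∉ {0,1,t,s} and Q2 + 1/Q1 ∉ {0,1,t,s}, one has H1(ψ(Q1,P1,Q2,P2), t, s) = P(Q1,P1,Q2,P2). -/
/-- The quadratic form `B(q,p)` appearing in the Garnier Hamiltonian, with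
`κ = ((κ0+κ1+θ1+θ2-1)² - κ∞²)/4`. -/
noncomputable def garnierB (κ0 κ1 κinf θ1 θ2 t s q p : ℂ) : ℂ :=
  p ^ 2 + (((κ0 + κ1 + θ1 + θ2 - 1) ^ 2 - κinf ^ 2) / 4) / (q * (q - 1)) -
    ((θ1 - 1) / (q - t) + θ2 / (q - s) + κ0 / q + κ1 / (q - 1)) * p

/-- The Hamiltonian `H1` of the Garnier system in two variables. -/
noncomputable def garnierH1 (κ0 κ1 κinf θ1 θ2 q1 p1 q2 p2 t s : ℂ) : ℂ :=
  -(q1 * (q1 - 1) * (q1 - t) * (q1 - s) * (q2 - t)) /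
      ((q1 - q2) * t * (t - 1) * (t - s)) *
      garnierB κ0 κ1 κinf θ1 θ2 t s q1 p1 -
    (q2 * (q2 - 1) * (q2 - t) * (q2 - s) * (q1 - t)) /
      ((q2 - q1) * t * (t - 1) * (t - s)) *
      garnierB κ0 κ1 κinf θ1 θ2 t s q2 p2

/-- The inverse ψ of the symplectic transformation φ1, written componentwise:
`ψ(Q1,P1,Q2,P2) = (Q2 + 1/Q1, Q1(c - P1·Q1), Q2, P2 - Q1(c - P1·Q1))`. -/
noncomputable def psi (c : ℂ) : ℂ × ℂ × ℂ × ℂ → ℂ × ℂ × ℂ × ℂ :=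
  fun (Q1, P1, Q2, P2) =>
    (Q2 + 1 / Q1, Q1 * (c - P1 * Q1), Q2, P2 - Q1 * (c - P1 * Q1))

/-- `H1` evaluated on a tuple of canonical variables. -/
noncomputable def garnierH1' (κ0 κ1 κinf θ1 θ2 : ℂ) (v : ℂ × ℂ × ℂ × ℂ)
    (t s : ℂ) : ℂ :=
  garnierH1 κ0 κ1 κinf θ1 θ2 v.1 v.2.1 v.2.2.1 v.2.2.2 t s

/-!
Clearing the poles of `B` gives `F(q, p) = q(q - 1)(q - t)(q - s) B(q, p) = a(q) p² - b(q) p + k(q)`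
with `deg a ≤ 4`, `deg b ≤ 3`, `deg k ≤ 2`. Since `q1 - q2 = 1 / Q1`, the only possible pole of
`H1 ∘ ψ` comes from `Q1 * F(Q2 + 1 / Q1, Q1 * w)` with `w = c - P1 * Q1`. Homogenizing `a`, `b`, `k`
shows that `Q1² * F(Q2 + 1 / Q1, Q1 * w)` is a polynomial, whose value at `Q1 = 0` is the indicial
polynomial `a₄ x² - b₃ x + k₂` at `x = c`. This vanishes, so a factor `Q1` cancels.
-/

open Polynomial

section MomentumQuadratic

variable {R A B : Type*} [CommRing R] [CommRing A] [Algebra R A] [CommRing B] [Algebra R B]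

/-- The function `a(q) p² - b(q) p + k(q)`, quadratic in the momentum `p`. The arguments `q` and `p`
live in an arbitrary algebra, so that they can be numbers as well as polynomials. -/
noncomputable def momentumQuadratic (a b k : R[X]) (q p : A) : A :=
  aeval q a * p ^ 2 - aeval q b * p + aeval q k

/-- The polynomial expression for `Qⁿ * momentumQuadratic a b k (q + 1 / Q) (Q * w)`, valid for
`deg a ≤ n + 2`, `deg b ≤ n + 1`, `deg k ≤ n` and `Q ≠ 0`, that still makes sense at `Q = 0`. -/
noncomputable def momentumQuadraticAtInfinity (n : ℕ) (a b k : R[X]) (Q q w : A) : A :=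
  MvPolynomial.aeval ![q * Q + 1, Q] (a.homogenize (n + 2)) * w ^ 2 -
    MvPolynomial.aeval ![q * Q + 1, Q] (b.homogenize (n + 1)) * w +
    MvPolynomial.aeval ![q * Q + 1, Q] (k.homogenize n)

theorem map_momentumQuadratic (f : A →ₐ[R] B) (a b k : R[X]) (q p : A) :
    f (momentumQuadratic a b k q p) = momentumQuadratic a b k (f q) (f p) := by
  simp [momentumQuadratic, aeval_algHom_apply]

theorem map_momentumQuadraticAtInfinity (f : A →ₐ[R] B) (n : ℕ) (a b k : R[X]) (Q q w : A) :
    f (momentumQuadraticAtInfinity n a b k Q q w) =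
      momentumQuadraticAtInfinity n a b k (f Q) (f q) (f w) := by
  have map_aeval (g : MvPolynomial (Fin 2) R) :
      f (MvPolynomial.aeval ![q * Q + 1, Q] g) =
        MvPolynomial.aeval ![f q * f Q + 1, f Q] g := by
    rw [← AlgHom.comp_apply, MvPolynomial.comp_aeval]
    congr 2
    ext i
    fin_cases i <;> simp
  simp [momentumQuadraticAtInfinity, map_aeval]

theorem aeval_homogenize_one_zero (p : R[X]) (n : ℕ) :
    MvPolynomial.aeval ![(1 : A), 0] (p.homogenize n) = algebraMap R A (p.coeff n) := by
  rw [homogenize, map_sum, Finset.sum_eq_single (n, 0)]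
  · simp [MvPolynomial.aeval_monomial, Finsupp.prod_fintype]
  · rintro ⟨i, j⟩ hij hne
    have hj : j ≠ 0 := by
      rintro rfl
      simp_all
    simp [MvPolynomial.aeval_monomial, Finsupp.prod_fintype, hj]
  · simp

theorem momentumQuadraticAtInfinity_zero (n : ℕ) (a b k : R[X]) (q w : A) :
    momentumQuadraticAtInfinity n a b k 0 q w =
      algebraMap R A (a.coeff (n + 2)) * w ^ 2 - algebraMap R A (b.coeff (n + 1)) * w +
        algebraMap R A (k.coeff n) := by
  simp [momentumQuadraticAtInfinity, aeval_homogenize_one_zero]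

theorem dvd_momentumQuadraticAtInfinity {n : ℕ} {a b k : R[X]} {c : R}
    (hc : a.coeff (n + 2) * c ^ 2 - b.coeff (n + 1) * c + k.coeff n = 0) (Q P q : A) :
    Q ∣ momentumQuadraticAtInfinity n a b k Q q (algebraMap R A c - P * Q) := by
  let π := Ideal.Quotient.mkₐ R (Ideal.span {Q})
  have hQ : π Q = 0 := (Ideal.Quotient.eq_zero_iff_dvd Q Q).2 dvd_rfl
  refine (Ideal.Quotient.eq_zero_iff_dvd Q _).1 ?_
  change π _ = 0
  rw [map_momentumQuadraticAtInfinity, map_sub, map_mul, AlgHom.commutes, hQ, mul_zero, sub_zero,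
    momentumQuadraticAtInfinity_zero]
  simpa using congrArg (algebraMap R (A ⧸ Ideal.span {Q})) hc

variable {K : Type*} [Field K]

theorem pow_mul_momentumQuadratic_add_one_div {n : ℕ} {a b k : K[X]}
    (ha : a.natDegree ≤ n + 2) (hb : b.natDegree ≤ n + 1) (hk : k.natDegree ≤ n)
    {Q : K} (hQ : Q ≠ 0) (q w : K) :
    Q ^ n * momentumQuadratic a b k (q + 1 / Q) (Q * w) =
      momentumQuadraticAtInfinity n a b k Q q w := by
  have aeval_eq {p : K[X]} {m : ℕ} (hp : p.natDegree ≤ m) :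
      MvPolynomial.aeval ![q * Q + 1, Q] (p.homogenize m) = p.eval (q + 1 / Q) * Q ^ m := by
    rw [MvPolynomial.aeval_eq_eval, eval_homogenize hp _ (by simpa using hQ)]
    simp [add_div, hQ]
  simp only [momentumQuadraticAtInfinity, momentumQuadratic, aeval_eq ha, aeval_eq hb, aeval_eq hk,
    coe_aeval_eq_eval]
  ring

theorem exists_eval_eq_pow_mul_momentumQuadratic {σ : Type*} {n : ℕ} {a b k : K[X]} {c : K}
    (ha : a.natDegree ≤ n + 3) (hb : b.natDegree ≤ n + 2) (hk : k.natDegree ≤ n + 1)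
    (hc : a.coeff (n + 3) * c ^ 2 - b.coeff (n + 2) * c + k.coeff (n + 1) = 0)
    (Q P q : MvPolynomial σ K) :
    ∃ G : MvPolynomial σ K, ∀ v : σ → K, Q.eval v ≠ 0 →
      G.eval v = Q.eval v ^ n *
        momentumQuadratic a b k (q.eval v + 1 / Q.eval v)
          (Q.eval v * (c - P.eval v * Q.eval v)) := by
  obtain ⟨G, hG⟩ := dvd_momentumQuadraticAtInfinity hc Q P q
  refine ⟨G, fun v hQ ↦ mul_left_cancel₀ hQ ?_⟩
  have hGv := congrArg (MvPolynomial.aeval v) hG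
  rw [map_momentumQuadraticAtInfinity, map_sub, map_mul, map_mul, AlgHom.commutes] at hGv
  simp only [MvPolynomial.aeval_eq_eval, Algebra.algebraMap_self_apply] at hGv
  rw [← hGv, ← pow_mul_momentumQuadratic_add_one_div ha hb hk hQ]
  ring

end MomentumQuadratic

section Garnier

/-- The coefficient of `p²` in `q (q - 1) (q - t) (q - s) * B(q, p)`. -/
noncomputable def garnierQuartic (t s : ℂ) : ℂ[X] :=
  X * (X - 1) * (X - C t) * (X - C s)

/-- The coefficient of `-p` in `q (q - 1) (q - t) (q - s) * B(q, p)`. -/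
noncomputable def garnierCubic (κ0 κ1 θ1 θ2 t s : ℂ) : ℂ[X] :=
  C (θ1 - 1) * (X * (X - 1) * (X - C s)) + C θ2 * (X * (X - 1) * (X - C t)) +
    C κ0 * ((X - 1) * (X - C t) * (X - C s)) + C κ1 * (X * (X - C t) * (X - C s))

/-- The momentum-free part of `q (q - 1) (q - t) (q - s) * B(q, p)`. -/
noncomputable def garnierQuadratic (κ0 κ1 κinf θ1 θ2 t s : ℂ) : ℂ[X] :=
  C (((κ0 + κ1 + θ1 + θ2 - 1) ^ 2 - κinf ^ 2) / 4) * ((X - C t) * (X - C s))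

/-- The polynomial `q (q - 1) (q - t) (q - s) * B(q, p)`, obtained from `B` by clearing its poles.
As for `momentumQuadratic`, the arguments `q` and `p` live in an arbitrary algebra. -/
noncomputable def garnierClearedB {A : Type*} [CommRing A] [Algebra ℂ A]
    (κ0 κ1 κinf θ1 θ2 t s : ℂ) (q p : A) : A :=
  momentumQuadratic (garnierQuartic t s) (garnierCubic κ0 κ1 θ1 θ2 t s)
    (garnierQuadratic κ0 κ1 κinf θ1 θ2 t s) q p

variable (κ0 κ1 κinf θ1 θ2 t s : ℂ)

theorem map_garnierClearedB {A B : Type*} [CommRing A] [Algebra ℂ A] [CommRing B] [Algebra ℂ B]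
    (f : A →ₐ[ℂ] B) (q p : A) :
    f (garnierClearedB κ0 κ1 κinf θ1 θ2 t s q p) =
      garnierClearedB κ0 κ1 κinf θ1 θ2 t s (f q) (f p) :=
  map_momentumQuadratic f _ _ _ q p

theorem natDegree_garnierQuartic_le : (garnierQuartic t s).natDegree ≤ 4 := by
  unfold garnierQuartic
  compute_degree

theorem natDegree_garnierCubic_le : (garnierCubic κ0 κ1 θ1 θ2 t s).natDegree ≤ 3 := by
  unfold garnierCubic
  compute_degree

theorem natDegree_garnierQuadratic_le :
    (garnierQuadratic κ0 κ1 κinf θ1 θ2 t s).natDegree ≤ 2 := by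
  unfold garnierQuadratic
  compute_degree

theorem coeff_garnierQuartic_four : (garnierQuartic t s).coeff 4 = 1 := by
  unfold garnierQuartic
  compute_degree!

theorem coeff_garnierCubic_three :
    (garnierCubic κ0 κ1 θ1 θ2 t s).coeff 3 = κ0 + κ1 + θ1 + θ2 - 1 := by
  unfold garnierCubic
  compute_degree!
  ring

theorem coeff_garnierQuadratic_two :
    (garnierQuadratic κ0 κ1 κinf θ1 θ2 t s).coeff 2 =
      ((κ0 + κ1 + θ1 + θ2 - 1) ^ 2 - κinf ^ 2) / 4 := by
  unfold garnierQuadratic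
  compute_degree!

theorem garnier_indicial_eq_zero :
    (garnierQuartic t s).coeff 4 * ((κ0 + κ1 - κinf + θ1 + θ2 - 1) / 2) ^ 2 -
        (garnierCubic κ0 κ1 θ1 θ2 t s).coeff 3 * ((κ0 + κ1 - κinf + θ1 + θ2 - 1) / 2) +
      (garnierQuadratic κ0 κ1 κinf θ1 θ2 t s).coeff 2 = 0 := by
  rw [coeff_garnierQuartic_four, coeff_garnierCubic_three, coeff_garnierQuadratic_two]
  ring

theorem exists_eval_eq_mul_garnierClearedB {σ : Type*} (Q P q : MvPolynomial σ ℂ) :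
    ∃ G : MvPolynomial σ ℂ, ∀ v : σ → ℂ, Q.eval v ≠ 0 →
      G.eval v = Q.eval v * garnierClearedB κ0 κ1 κinf θ1 θ2 t s (q.eval v + 1 / Q.eval v)
        (Q.eval v * ((κ0 + κ1 - κinf + θ1 + θ2 - 1) / 2 - P.eval v * Q.eval v)) := by
  simpa only [pow_one, garnierClearedB] using exists_eval_eq_pow_mul_momentumQuadratic (n := 1)
    (natDegree_garnierQuartic_le t s) (natDegree_garnierCubic_le κ0 κ1 θ1 θ2 t s)
    (natDegree_garnierQuadratic_le κ0 κ1 κinf θ1 θ2 t s)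
    (garnier_indicial_eq_zero κ0 κ1 κinf θ1 θ2 t s) Q P q

variable {κ0 κ1 κinf θ1 θ2 t s}

theorem mul_garnierB_eq_garnierClearedB {q : ℂ} (hq0 : q ≠ 0) (hq1 : q ≠ 1) (hqt : q ≠ t)
    (hqs : q ≠ s) (p : ℂ) :
    q * (q - 1) * (q - t) * (q - s) * garnierB κ0 κ1 κinf θ1 θ2 t s q p =
      garnierClearedB κ0 κ1 κinf θ1 θ2 t s q p := by
  have hq1' := sub_ne_zero.2 hq1
  have hqt' := sub_ne_zero.2 hqt
  have hqs' := sub_ne_zero.2 hqs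
  simp only [garnierB, garnierClearedB, momentumQuadratic, garnierQuartic, garnierCubic,
    garnierQuadratic, coe_aeval_eq_eval, eval_add, eval_sub, eval_mul, eval_X, eval_C, eval_one]
  field_simp
  ring

theorem garnierH1_eq_garnierClearedB {q1 q2 : ℂ}
    (hq10 : q1 ≠ 0) (hq11 : q1 ≠ 1) (hq1t : q1 ≠ t) (hq1s : q1 ≠ s)
    (hq20 : q2 ≠ 0) (hq21 : q2 ≠ 1) (hq2t : q2 ≠ t) (hq2s : q2 ≠ s) (p1 p2 : ℂ) :
    garnierH1 κ0 κ1 κinf θ1 θ2 q1 p1 q2 p2 t s =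
      (t * (t - 1) * (t - s))⁻¹ * (q1 - q2)⁻¹ *
        ((q1 - t) * garnierClearedB κ0 κ1 κinf θ1 θ2 t s q2 p2 -
          (q2 - t) * garnierClearedB κ0 κ1 κinf θ1 θ2 t s q1 p1) := by
  rw [garnierH1, ← mul_garnierB_eq_garnierClearedB hq10 hq11 hq1t hq1s,
    ← mul_garnierB_eq_garnierClearedB hq20 hq21 hq2t hq2s, ← neg_sub q1 q2]
  simp only [div_eq_mul_inv, mul_inv, inv_neg, neg_mul]
  ring

theorem garnierH1'_psi_eq_garnierClearedB {Q1 Q2 : ℂ} (hQ1 : Q1 ≠ 0)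
    (hq20 : Q2 ≠ 0) (hq21 : Q2 ≠ 1) (hq2t : Q2 ≠ t) (hq2s : Q2 ≠ s)
    (hq10 : Q2 + 1 / Q1 ≠ 0) (hq11 : Q2 + 1 / Q1 ≠ 1) (hq1t : Q2 + 1 / Q1 ≠ t)
    (hq1s : Q2 + 1 / Q1 ≠ s) (c P1 P2 : ℂ) :
    garnierH1' κ0 κ1 κinf θ1 θ2 (psi c (Q1, P1, Q2, P2)) t s =
      (t * (t - 1) * (t - s))⁻¹ *
        ((Q1 * (Q2 - t) + 1) *
            garnierClearedB κ0 κ1 κinf θ1 θ2 t s Q2 (P2 - Q1 * (c - P1 * Q1)) -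
          (Q2 - t) * (Q1 *
            garnierClearedB κ0 κ1 κinf θ1 θ2 t s (Q2 + 1 / Q1) (Q1 * (c - P1 * Q1)))) := by
  have inv_q1_sub_q2 : (Q2 + 1 / Q1 - Q2)⁻¹ = Q1 := by simp
  have Q1_mul_q1_sub : Q1 * (Q2 + 1 / Q1 - t) = Q1 * (Q2 - t) + 1 := by
    field_simp
    ring
  simp only [garnierH1', psi]
  rw [garnierH1_eq_garnierClearedB hq10 hq11 hq1t hq1s hq20 hq21 hq2t hq2s, inv_q1_sub_q2,
    ← Q1_mul_q1_sub]
  ring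

end Garnier

/-- φ1 resolves the accessible singularity of the Garnier system and makes H1
polynomial: for fixed `t, s ∉ {0,1}` with `t ≠ s`, there is a polynomial `P` in four
variables such that `H1(ψ(Q1,P1,Q2,P2), t, s) = P(Q1,P1,Q2,P2)` on the indicated
domain, where `c = (κ0+κ1-κ∞+θ1+θ2-1)/2`. -/
theorem garnierH1_psi_polynomial (κ0 κ1 κinf θ1 θ2 t s : ℂ)
    (ht0 : t ≠ 0) (ht1 : t ≠ 1) (hs0 : s ≠ 0) (hs1 : s ≠ 1) (hts : t ≠ s) :
    ∃ P : MvPolynomial (Fin 4) ℂ, ∀ Q1 P1 Q2 P2 : ℂ,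
      Q1 ≠ 0 → Q2 ≠ 0 → Q2 ≠ 1 → Q2 ≠ t → Q2 ≠ s →
      Q2 + 1 / Q1 ≠ 0 → Q2 + 1 / Q1 ≠ 1 → Q2 + 1 / Q1 ≠ t → Q2 + 1 / Q1 ≠ s →
      garnierH1' κ0 κ1 κinf θ1 θ2
          (psi ((κ0 + κ1 - κinf + θ1 + θ2 - 1) / 2) (Q1, P1, Q2, P2)) t s =
        MvPolynomial.eval ![Q1, P1, Q2, P2] P := by
  let c := (κ0 + κ1 - κinf + θ1 + θ2 - 1) / 2
  let F : MvPolynomial (Fin 4) ℂ :=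
    garnierClearedB κ0 κ1 κinf θ1 θ2 t s (.X 2) (.X 3 - .X 0 * (.C c - .X 1 * .X 0))
  obtain ⟨G, hG⟩ := exists_eval_eq_mul_garnierClearedB κ0 κ1 κinf θ1 θ2 t s
    (.X 0) (.X 1) (.X 2 : MvPolynomial (Fin 4) ℂ)
  refine ⟨.C (t * (t - 1) * (t - s))⁻¹ *
    ((.X 0 * (.X 2 - .C t) + 1) * F - (.X 2 - .C t) * G), ?_⟩
  intro Q1 P1 Q2 P2 hQ1 hq20 hq21 hq2t hq2s hq10 hq11 hq1t hq1s
  have eval_F : F.eval ![Q1, P1, Q2, P2] =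
      garnierClearedB κ0 κ1 κinf θ1 θ2 t s Q2 (P2 - Q1 * (c - P1 * Q1)) := by
    rw [← MvPolynomial.aeval_eq_eval, map_garnierClearedB]
    simp
  have eval_G : G.eval ![Q1, P1, Q2, P2] =
      Q1 * garnierClearedB κ0 κ1 κinf θ1 θ2 t s (Q2 + 1 / Q1) (Q1 * (c - P1 * Q1)) := by
    simpa using hG ![Q1, P1, Q2, P2] (by simpa using hQ1)
  rw [garnierH1'_psi_eq_garnierClearedB hQ1 hq20 hq21 hq2t hq2s hq10 hq11 hq1t hq1s,
    ← eval_F, ← eval_G]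
  simp
end

section
/- Holomorphy in the chart r1: fix t, s ∈ ℂ with t, s ∉ {0,1} and t ≠ s; then there exists a polynomial P in four variables with complex coefficients such that for all complex (q1,p1,q2,p2) with q1 ≠ 0, p2 ≠ 0, q2 ∉ {0,1,t,s} and q2 + 1/q1 ∉ {0,1,t,s}, one has H1(ψ(q1,p1,q2,p2), t, s) = P(q1, p1, −((q2−1)·p2 − κ1)·p2, 1/p2). That is, the polynomial Hamiltonian obtained from H1 by φ1 becomes again polynomial in the coordinates (x1,y1,z1,w1) = (q1, p1, −((q2−1)p2−κ1)p2, 1/p2). -/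
/-!
Multiplied by `q(q-1)(q-t)(q-s)`, the form `B(q,p)` becomes `F(q,p) = A(q)p² - N(q)p + M(q)` with
`deg A ≤ 4`, `deg N ≤ 3`, `deg M ≤ 2`. Writing `(x, y, q, p)` for the chart variables of `ψ`, and
`v = c - xy`, `r = q + 1/x`, the Hamiltonian is, up to the constant `t(t-1)(t-s)`,
`x(r-t) F(q, p - xv) - (q-t) x F(r, xv)`.

* In `x F(r, xv)` the only possible pole is at `x = 0`, and its residue is the value at `v` of the
  quadratic formed by the leading coefficients of `A`, `N`, `M`. This quadratic vanishes at `v = c`,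
  hence is divisible by `v - c = -xy`.
* In `F(q, p - xv)` the momentum `p = 1/w` is the only non-polynomial quantity. Since `A` vanishes
  at `1` and `N(1) = κ1 A'(1)`, it occurs only through `(q-1)p = κ1 - zw` and `((q-1)p - κ1)p = -z`.

Both arguments take place in the algebra of functions generated by the coordinates `x, y, z, w`.
-/

open Polynomial

section QuadraticSymbol

variable {K R : Type*} [CommRing K] [CommRing R] [Algebra K R]

/-- The polynomial `A(q)p² - N(q)p + M(q)`, quadratic in the momentum `p`, with values in any
`K`-algebra. -/
noncomputable def quadraticSymbol (A N M : K[X]) (q p : R) : R :=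
  aeval q A * p ^ 2 - aeval q N * p + aeval q M

theorem quadraticSymbol_fn_apply {D : Type*} (A N M : K[X]) (q p : D → K) (d : D) :
    quadraticSymbol A N M q p d = quadraticSymbol A N M (q d) (p d) := by
  simp [quadraticSymbol, aeval_fn_apply]

theorem exists_pow_mul_aeval_add_eq {S : Subalgebra K R} (x q : S) {x' : R}
    (hxx' : (x : R) * x' = 1) {n : ℕ} {f : K[X]} (hf : f.natDegree ≤ n) :
    ∃ g : S, (x : R) ^ n * aeval ((q : R) + x') f = algebraMap K R (f.coeff n) + x * g := by
  induction n generalizing f with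
  | zero =>
    refine ⟨0, ?_⟩
    rw [eq_C_of_natDegree_le_zero hf]
    simp
  | succ n ih =>
    obtain ⟨g, hg⟩ := ih (f := f.divX) (by rw [natDegree_divX_eq_natDegree_tsub_one]; lia)
    rw [coeff_divX] at hg
    have horner : aeval ((q : R) + x') f =
        aeval ((q : R) + x') f.divX * (q + x') + algebraMap K R (f.coeff 0) := by
      conv_lhs => rw [← divX_mul_X_add f]
      simp
    refine ⟨q * algebraMap K S (f.coeff (n + 1)) + (1 + x * q) * g
      + x ^ n * algebraMap K S (f.coeff 0), ?_⟩
    push_cast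
    rw [horner]
    linear_combination (1 + (x : R) * q) * hg + x ^ n * aeval ((q : R) + x') f.divX * hxx'

theorem pow_mul_quadraticSymbol_add_mem {S : Subalgebra K R} (x q v : S) {x' : R}
    (hxx' : (x : R) * x' = 1) {n : ℕ} {A N M : K[X]} (hA : A.natDegree ≤ n + 3)
    (hN : N.natDegree ≤ n + 2) (hM : M.natDegree ≤ n + 1)
    (hdvd : x ∣ A.coeff (n + 3) • v ^ 2 - N.coeff (n + 2) • v + algebraMap K S (M.coeff (n + 1))) :
    (x : R) ^ n * quadraticSymbol A N M ((q : R) + x') (x * v) ∈ S := by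
  obtain ⟨a, ha⟩ := exists_pow_mul_aeval_add_eq x q hxx' hA
  obtain ⟨b, hb⟩ := exists_pow_mul_aeval_add_eq x q hxx' hN
  obtain ⟨m, hm⟩ := exists_pow_mul_aeval_add_eq x q hxx' hM
  obtain ⟨d, hd⟩ := hdvd
  replace hd := congrArg Subtype.val hd
  push_cast [Algebra.smul_def] at hd
  have cancelled : (x : R) * (x ^ n * quadraticSymbol A N M ((q : R) + x') (x * v)) =
      x * ((d + v ^ 2 * a - v * b + m : S) : R) := by
    push_cast [quadraticSymbol]
    linear_combination v ^ 2 * ha - v * hb + hm + hd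
  rw [(IsUnit.of_mul_eq_one x' hxx').mul_left_cancel cancelled]
  exact Subtype.property _

theorem quadraticSymbol_sub_mem {S : Subalgebra K R} (q u e z : S) {p : R} {a k : K}
    (he : ((q : R) - algebraMap K R a) * p = e) (hz : ((e : R) - algebraMap K R k) * p = z)
    (A N M : K[X]) :
    quadraticSymbol ((X - C a) * A) ((X - C a) * N + C k * A) M (q : R) (p - u) ∈ S := by
  have expanded : quadraticSymbol ((X - C a) * A) ((X - C a) * N + C k * A) M (q : R) (p - u) =
      (aeval q A * (z - (e + (e - (q - algebraMap K S a) * u) - algebraMap K S k) * u)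
        - aeval q N * (e - (q - algebraMap K S a) * u) + aeval q M : S) := by
    push_cast [quadraticSymbol, map_mul, map_add, map_sub, aeval_X, aeval_C]
    simp only [← aeval_subalgebra_coe]
    rw [← he] at hz ⊢
    linear_combination (aeval q A : S) * hz
  rw [expanded]
  exact Subtype.property _

end QuadraticSymbol

theorem exists_eval_eq_of_mem_adjoin_range {K D ι : Type*} [CommRing K] {coords : ι → D → K}
    {f : D → K} (hf : f ∈ Algebra.adjoin K (Set.range coords)) :
    ∃ P : MvPolynomial ι K, ∀ d, f d = MvPolynomial.eval (fun i ↦ coords i d) P := by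
  rw [Algebra.adjoin_range_eq_range_aeval] at hf
  obtain ⟨P, rfl⟩ := hf
  exact ⟨P, fun d ↦ MvPolynomial.comp_aeval_apply coords (Pi.evalAlgHom K (fun _ ↦ K) d) P⟩

section Garnier

variable {R : Type*} [CommRing R] [Algebra ℂ R] (κ0 κ1 κinf θ1 θ2 t s : ℂ)

/-- The coefficient `A(q) = q(q-1)(q-t)(q-s)` of `p²` in `q(q-1)(q-t)(q-s) B(q,p)`, with the factor
`q - 1` that is relevant to the chart `r1` split off. -/
noncomputable def garnierA : ℂ[X] := (X - C 1) * (X * (X - C t) * (X - C s))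

/-- The coefficient `N(q)` of `-p` in `q(q-1)(q-t)(q-s) B(q,p)`. -/
noncomputable def garnierN : ℂ[X] :=
  (X - C 1) * (C (θ1 - 1) * (X * (X - C s)) + C θ2 * (X * (X - C t))
    + C κ0 * ((X - C t) * (X - C s))) + C κ1 * (X * (X - C t) * (X - C s))

/-- The part `M(q) = κ(q-t)(q-s)` of `q(q-1)(q-t)(q-s) B(q,p)` that does not involve `p`. -/
noncomputable def garnierM : ℂ[X] :=
  C (((κ0 + κ1 + θ1 + θ2 - 1) ^ 2 - κinf ^ 2) / 4) * ((X - C t) * (X - C s))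

theorem natDegree_garnierA_le : (garnierA t s).natDegree ≤ 4 := by
  unfold garnierA
  compute_degree

theorem natDegree_garnierN_le : (garnierN κ0 κ1 θ1 θ2 t s).natDegree ≤ 3 := by
  unfold garnierN
  compute_degree

theorem natDegree_garnierM_le : (garnierM κ0 κ1 κinf θ1 θ2 t s).natDegree ≤ 2 := by
  unfold garnierM
  compute_degree

theorem coeff_garnierA : (garnierA t s).coeff 4 = 1 := by
  unfold garnierA
  compute_degree!

theorem coeff_garnierN : (garnierN κ0 κ1 θ1 θ2 t s).coeff 3 = κ0 + κ1 + θ1 + θ2 - 1 := by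
  unfold garnierN
  compute_degree!
  ring

theorem coeff_garnierM : (garnierM κ0 κ1 κinf θ1 θ2 t s).coeff 2 =
    ((κ0 + κ1 + θ1 + θ2 - 1) ^ 2 - κinf ^ 2) / 4 := by
  unfold garnierM
  compute_degree!

/-- The denominator-free form `F(q,p) = q(q-1)(q-t)(q-s) B(q,p)`, with values in any
`ℂ`-algebra. -/
noncomputable def garnierF (q p : R) : R :=
  quadraticSymbol (garnierA t s) (garnierN κ0 κ1 θ1 θ2 t s) (garnierM κ0 κ1 κinf θ1 θ2 t s) q p

theorem garnierF_eq_mul_garnierB {q : ℂ} (p : ℂ) (h0 : q ≠ 0) (h1 : q ≠ 1) (ht : q ≠ t)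
    (hs : q ≠ s) :
    garnierF κ0 κ1 κinf θ1 θ2 t s q p =
      q * (q - 1) * (q - t) * (q - s) * garnierB κ0 κ1 κinf θ1 θ2 t s q p := by
  have h1' := sub_ne_zero.2 h1
  have ht' := sub_ne_zero.2 ht
  have hs' := sub_ne_zero.2 hs
  simp only [garnierF, quadraticSymbol, garnierA, garnierN, garnierM, garnierB, map_mul, map_add,
    map_sub, aeval_X, aeval_C, Algebra.algebraMap_self_apply]
  field_simp
  ring

/-- The constant `c` of the transformation `ψ`. -/
noncomputable def garnierC : ℂ := (κ0 + κ1 - κinf + θ1 + θ2 - 1) / 2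

theorem dvd_garnier_leadingCoeff_quadratic {S : Subalgebra ℂ R} (x y : S) :
    x ∣ (garnierA t s).coeff 4 • (algebraMap ℂ S (garnierC κ0 κ1 κinf θ1 θ2) - y * x) ^ 2
      - (garnierN κ0 κ1 θ1 θ2 t s).coeff 3 • (algebraMap ℂ S (garnierC κ0 κ1 κinf θ1 θ2) - y * x)
      + algebraMap ℂ S ((garnierM κ0 κ1 κinf θ1 θ2 t s).coeff 2) := by
  refine ⟨y * (x * y + algebraMap ℂ S κinf), ?_⟩
  have sum_roots : κ0 + κ1 + θ1 + θ2 - 1 = 2 * garnierC κ0 κ1 κinf θ1 θ2 + κinf := by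
    unfold garnierC
    ring
  have prod_roots : ((κ0 + κ1 + θ1 + θ2 - 1) ^ 2 - κinf ^ 2) / 4 =
      garnierC κ0 κ1 κinf θ1 θ2 * (garnierC κ0 κ1 κinf θ1 θ2 + κinf) := by
    unfold garnierC
    ring
  rw [coeff_garnierA, coeff_garnierN, coeff_garnierM, prod_roots, sum_roots]
  simp only [Algebra.smul_def, map_mul, map_add, map_one, map_ofNat]
  ring

theorem mul_garnierF_add_mem {S : Subalgebra ℂ R} (x y q : S) {x' : R}
    (hxx' : (x : R) * x' = 1) :
    x * garnierF κ0 κ1 κinf θ1 θ2 t s ((q : R) + x')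
      (x * (algebraMap ℂ R (garnierC κ0 κ1 κinf θ1 θ2) - y * x)) ∈ S := by
  simpa only [pow_one, garnierF, AddSubgroupClass.coe_sub, Subalgebra.coe_mul,
    Subalgebra.coe_algebraMap] using pow_mul_quadraticSymbol_add_mem x q
    (algebraMap ℂ S (garnierC κ0 κ1 κinf θ1 θ2) - y * x) hxx' (n := 1)
    (natDegree_garnierA_le t s) (natDegree_garnierN_le κ0 κ1 θ1 θ2 t s)
    (natDegree_garnierM_le κ0 κ1 κinf θ1 θ2 t s)
    (dvd_garnier_leadingCoeff_quadratic κ0 κ1 κinf θ1 θ2 t s x y)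

/-- The function `t(t-1)(t-s) H1(ψ(x,y,q,p))` with values in any `ℂ`-algebra; the argument `x'`
stands for `1/x`. -/
noncomputable def garnierClearedH1 (x x' y q p : R) : R :=
  let u := x * (algebraMap ℂ R (garnierC κ0 κ1 κinf θ1 θ2) - y * x)
  x * (q + x' - algebraMap ℂ R t) * garnierF κ0 κ1 κinf θ1 θ2 t s q (p - u)
    - (q - algebraMap ℂ R t) * (x * garnierF κ0 κ1 κinf θ1 θ2 t s (q + x') u)

theorem garnierClearedH1_mem {S : Subalgebra ℂ R} (x y z w : S) {x' q p : R}
    (hxx' : (x : R) * x' = 1) (hwp : (w : R) * p = 1)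
    (hz : (z : R) = -((q - 1) * p - algebraMap ℂ R κ1) * p) :
    garnierClearedH1 κ0 κ1 κinf θ1 θ2 t s (x : R) x' y q p ∈ S := by
  obtain ⟨e, he⟩ : ∃ e : S, (e : R) = (q - 1) * p := by
    refine ⟨algebraMap ℂ S κ1 - z * w, ?_⟩
    push_cast
    linear_combination (-(w : R)) * hz + ((q - 1) * p - algebraMap ℂ R κ1) * hwp
  obtain ⟨q, rfl⟩ : ∃ q' : S, (q' : R) = q := by
    refine ⟨1 + w * e, ?_⟩
    push_cast
    linear_combination (w : R) * he + (q - 1) * hwp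
  obtain ⟨u, hu⟩ : ∃ u : S,
      (u : R) = x * (algebraMap ℂ R (garnierC κ0 κ1 κinf θ1 θ2) - y * x) :=
    ⟨x * (algebraMap ℂ S (garnierC κ0 κ1 κinf θ1 θ2) - y * x), by push_cast; rfl⟩
  have first_factor_mem : (x : R) * (q + x' - algebraMap ℂ R t) ∈ S := by
    have : (x : R) * (q + x' - algebraMap ℂ R t) = (x * (q - algebraMap ℂ S t) + 1 : S) := by
      push_cast
      linear_combination hxx'
    exact this ▸ Subtype.property _
  have momentum_mem : garnierF κ0 κ1 κinf θ1 θ2 t s (q : R) (p - u) ∈ S :=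
    quadraticSymbol_sub_mem q u e (-z) (by rw [map_one, he])
      (by push_cast; linear_combination p * he + hz) _ _ _
  rw [hu] at momentum_mem
  exact sub_mem (mul_mem first_factor_mem momentum_mem)
    (mul_mem (sub_mem q.2 (S.algebraMap_mem t))
      (mul_garnierF_add_mem κ0 κ1 κinf θ1 θ2 t s x y q hxx'))

theorem garnierClearedH1_fn_apply {D : Type*} (x x' y q p : D → ℂ) (d : D) :
    garnierClearedH1 κ0 κ1 κinf θ1 θ2 t s x x' y q p d =
      garnierClearedH1 κ0 κ1 κinf θ1 θ2 t s (x d) (x' d) (y d) (q d) (p d) := by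
  simp [garnierClearedH1, garnierF, quadraticSymbol_fn_apply]

theorem exists_garnierClearedH1_eq_eval :
    ∃ P : MvPolynomial (Fin 4) ℂ, ∀ q1 p1 q2 p2 : ℂ, q1 ≠ 0 → p2 ≠ 0 →
      garnierClearedH1 κ0 κ1 κinf θ1 θ2 t s q1 (1 / q1) p1 q2 p2 =
        MvPolynomial.eval ![q1, p1, -((q2 - 1) * p2 - κ1) * p2, 1 / p2] P := by
  let D := {v : ℂ × ℂ × ℂ × ℂ // v.1 ≠ 0 ∧ v.2.2.2 ≠ 0}
  let q1 : D → ℂ := fun v ↦ v.1.1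
  let p1 : D → ℂ := fun v ↦ v.1.2.1
  let q2 : D → ℂ := fun v ↦ v.1.2.2.1
  let p2 : D → ℂ := fun v ↦ v.1.2.2.2
  let coords : Fin 4 → D → ℂ :=
    ![q1, p1, -((q2 - 1) * p2 - algebraMap ℂ (D → ℂ) κ1) * p2, 1 / p2]
  let S := Algebra.adjoin ℂ (Set.range coords)
  let coord (i : Fin 4) : S := ⟨coords i, Algebra.subset_adjoin ⟨i, rfl⟩⟩
  have mem : garnierClearedH1 κ0 κ1 κinf θ1 θ2 t s q1 (1 / q1) p1 q2 p2 ∈ S :=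
    garnierClearedH1_mem κ0 κ1 κinf θ1 θ2 t s (coord 0) (coord 1) (coord 2) (coord 3)
      (funext fun v ↦ mul_one_div_cancel v.2.1) (funext fun v ↦ one_div_mul_cancel v.2.2) rfl
  obtain ⟨P, hP⟩ := exists_eval_eq_of_mem_adjoin_range mem
  refine ⟨P, fun a b c d ha hd ↦ ?_⟩
  have h := hP ⟨(a, b, c, d), ha, hd⟩
  rw [garnierClearedH1_fn_apply] at h
  have coords_apply : (fun i ↦ coords i ⟨(a, b, c, d), ha, hd⟩) =
      ![a, b, -((c - 1) * d - κ1) * d, 1 / d] := by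
    funext i
    fin_cases i <;> rfl
  rwa [coords_apply] at h

theorem garnierH1_eq_garnierF {q1 q2 : ℂ} (p1 p2 : ℂ)
    (hq1 : q1 ≠ 0 ∧ q1 ≠ 1 ∧ q1 ≠ t ∧ q1 ≠ s) (hq2 : q2 ≠ 0 ∧ q2 ≠ 1 ∧ q2 ≠ t ∧ q2 ≠ s) :
    garnierH1 κ0 κ1 κinf θ1 θ2 q1 p1 q2 p2 t s =
      (t * (t - 1) * (t - s))⁻¹ * ((q1 - q2)⁻¹ *
        ((q1 - t) * garnierF κ0 κ1 κinf θ1 θ2 t s q2 p2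
          - (q2 - t) * garnierF κ0 κ1 κinf θ1 θ2 t s q1 p1)) := by
  obtain ⟨h0, h1, ht, hs⟩ := hq1
  obtain ⟨h0', h1', ht', hs'⟩ := hq2
  rw [garnierF_eq_mul_garnierB κ0 κ1 κinf θ1 θ2 t s p1 h0 h1 ht hs,
    garnierF_eq_mul_garnierB κ0 κ1 κinf θ1 θ2 t s p2 h0' h1' ht' hs', garnierH1,
    ← neg_sub q1 q2]
  simp only [div_eq_mul_inv, mul_inv, inv_neg, neg_mul]
  ring

theorem garnierH1'_psi_eq {q1 q2 : ℂ} (p1 p2 : ℂ)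
    (hq2 : q2 ≠ 0 ∧ q2 ≠ 1 ∧ q2 ≠ t ∧ q2 ≠ s)
    (hr : q2 + 1 / q1 ≠ 0 ∧ q2 + 1 / q1 ≠ 1 ∧ q2 + 1 / q1 ≠ t ∧ q2 + 1 / q1 ≠ s) :
    garnierH1' κ0 κ1 κinf θ1 θ2 (psi (garnierC κ0 κ1 κinf θ1 θ2) (q1, p1, q2, p2)) t s =
      (t * (t - 1) * (t - s))⁻¹ *
        garnierClearedH1 κ0 κ1 κinf θ1 θ2 t s q1 (1 / q1) p1 q2 p2 := by
  simp only [garnierH1', psi, garnierH1_eq_garnierF κ0 κ1 κinf θ1 θ2 t s _ _ hr hq2,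
    garnierClearedH1, Algebra.algebraMap_self_apply, add_sub_cancel_left, inv_div, div_one]
  ring

end Garnier

/-- Holomorphy in the chart `r1`: the polynomial Hamiltonian obtained from `H1`
by φ1 becomes again polynomial in the coordinates
`(x1,y1,z1,w1) = (q1, p1, -((q2-1)·p2 - κ1)·p2, 1/p2)`. -/
theorem garnierH1_chart_r1 (κ0 κ1 κinf θ1 θ2 t s : ℂ)
    (ht0 : t ≠ 0) (ht1 : t ≠ 1) (hs0 : s ≠ 0) (hs1 : s ≠ 1) (hts : t ≠ s) :
    ∃ P : MvPolynomial (Fin 4) ℂ, ∀ q1 p1 q2 p2 : ℂ,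
      q1 ≠ 0 → p2 ≠ 0 → q2 ≠ 0 → q2 ≠ 1 → q2 ≠ t → q2 ≠ s →
      q2 + 1 / q1 ≠ 0 → q2 + 1 / q1 ≠ 1 → q2 + 1 / q1 ≠ t → q2 + 1 / q1 ≠ s →
      garnierH1' κ0 κ1 κinf θ1 θ2
          (psi ((κ0 + κ1 - κinf + θ1 + θ2 - 1) / 2) (q1, p1, q2, p2)) t s =
        MvPolynomial.eval ![q1, p1, -((q2 - 1) * p2 - κ1) * p2, 1 / p2] P := by
  obtain ⟨P, hP⟩ := exists_garnierClearedH1_eq_eval κ0 κ1 κinf θ1 θ2 t s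
  refine ⟨MvPolynomial.C (t * (t - 1) * (t - s))⁻¹ * P, ?_⟩
  intro q1 p1 q2 p2 hq1 hp2 h0 h1 ht hs h0' h1' ht' hs'
  rw [map_mul, MvPolynomial.eval_C, ← hP q1 p1 q2 p2 hq1 hp2]
  exact garnierH1'_psi_eq κ0 κ1 κinf θ1 θ2 t s p1 p2 ⟨h0, h1, ht, hs⟩ ⟨h0', h1', ht', hs'⟩
end

section
/- Holomorphy in the chart r2: fix t, s ∈ ℂ with t, s ∉ {0,1} and t ≠ s; then there exists a polynomial P in four variables with complex coefficients such that for all complex (q1,p1,q2,p2) with q1 ≠ 0, q2 ∉ {0,1,t,s} and q2 + 1/q1 ∉ {0,1,t,s}, one has H1(ψ(q1,p1,q2,p2), t, s) = P((q1q2+1)q2, p1/q2², 1/q2, −(q2·p2 − 2(q1q2 + 1/2)·p1/q2)·q2). That is, the polynomial Hamiltonian obtained from H1 by φ1 becomes again polynomial in the coordinates (x2,y2,z2,w2) = ((q1q2+1)q2, p1/q2², 1/q2, −(q2p2 − 2(q1q2+1/2)p1/q2)q2). -/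
/-!
On the projective line write `q = X / Z` and `p = Z a`. Then `q (q - 1) (q - t) (q - s) B(q, p)` is
`Z⁻²` times a polynomial in `X, Z, a` whose reduction modulo `Z` is
`X² (X a - c) (X a + c - σ)`, where `σ = κ0 + κ1 + θ1 + θ2 - 1`, because `κ = c (σ - c)`. Blowing up
the point `X a = c` at infinity, that is, setting `X a = c + Z n`, makes this polynomial divisible
by `Z`, so only a simple pole `Z⁻¹` is left. In each term of `H1` this pole and the pole of `q - t`
at the other point are cancelled by the factor `Z1 Z2` of
`1 / (q1 - q2) = Z1 Z2 / (X1 Z2 - X2 Z1)`. Finally, the blow-up coordinates of both points of `ψ`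
are polynomial in the coordinates of the chart `r2`, and there `X1 Z2 - X2 Z1 = 1`.
-/

section CommRing

variable {R S : Type*} [CommRing R] [CommRing S]

/-- The quotient of `(X - αZ)(X - βZ) - X²` by `Z`. -/
def quadraticTail (α β X Z : R) : R :=
  -(α + β) * X + α * β * Z

/-- The quotient of `(X - αZ)(X - βZ)(X - γZ) - X³` by `Z`. -/
def cubicTail (α β γ X Z : R) : R :=
  -(α + β + γ) * X ^ 2 + (α * β + α * γ + β * γ) * X * Z - α * β * γ * Z ^ 2

theorem sub_mul_sub_eq_quadraticTail (α β X Z : R) :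
    (X - α * Z) * (X - β * Z) = X ^ 2 + Z * quadraticTail α β X Z := by
  unfold quadraticTail
  ring

theorem sub_mul_sub_mul_sub_eq_cubicTail (α β γ X Z : R) :
    (X - α * Z) * (X - β * Z) * (X - γ * Z) = X ^ 3 + Z * cubicTail α β γ X Z := by
  unfold cubicTail
  ring

/-- The polynomial `Z² q (q - 1) (q - t) (q - s) B(q, p)` at `q = X / Z`, `p = Z a`.
The factors `X` and `X - Z` are written `X - 0 * Z` and `X - 1 * Z` so that every product has the
shape expanded by `cubicTail`. -/
def garnierNumerator (κ0 κ1 θ1 θ2 κ t s X Z a : R) : R :=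
  X * ((X - 1 * Z) * (X - t * Z) * (X - s * Z)) * a ^ 2 + κ * ((X - t * Z) * (X - s * Z)) -
    ((θ1 - 1) * ((X - 0 * Z) * (X - 1 * Z) * (X - s * Z)) +
      θ2 * ((X - 0 * Z) * (X - 1 * Z) * (X - t * Z)) +
      κ0 * ((X - 1 * Z) * (X - t * Z) * (X - s * Z)) +
      κ1 * ((X - 0 * Z) * (X - t * Z) * (X - s * Z))) * a

/-- The quotient of `garnierNumerator` by `Z` on the blow-up `X a = c + Z n`, for
`κ = c (κ0 + κ1 + θ1 + θ2 - 1 - c)`. -/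
def garnierResidual (κ0 κ1 θ1 θ2 c t s X Z a n : R) : R :=
  X ^ 2 * n * (X * a + c - (κ0 + κ1 + θ1 + θ2 - 1)) + X * cubicTail 1 t s X Z * a ^ 2 +
    c * (κ0 + κ1 + θ1 + θ2 - 1 - c) * quadraticTail t s X Z -
    ((θ1 - 1) * cubicTail 0 1 s X Z + θ2 * cubicTail 0 1 t X Z +
      κ0 * cubicTail 1 t s X Z + κ1 * cubicTail 0 t s X Z) * a

theorem garnierNumerator_eq_mul_garnierResidual (κ0 κ1 θ1 θ2 c t s : R) {X Z a n : R}
    (h : X * a = c + Z * n) :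
    garnierNumerator κ0 κ1 θ1 θ2 (c * (κ0 + κ1 + θ1 + θ2 - 1 - c)) t s X Z a =
      Z * garnierResidual κ0 κ1 θ1 θ2 c t s X Z a n := by
  unfold garnierNumerator garnierResidual
  simp only [sub_mul_sub_mul_sub_eq_cubicTail]
  simp only [sub_mul_sub_eq_quadraticTail]
  linear_combination X ^ 2 * (X * a + c - (κ0 + κ1 + θ1 + θ2 - 1)) * h

/-- The polynomial `t (t - 1) (t - s) H1 ∘ ψ` in the coordinates `(x, y, z, w)` of the chart `r2`.
The two points have blow-up coordinates `(x, xz - 1, cz - y(xz - 1), c - xy)` and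
`(1, z, c + zm, m)` with `m = x²y - w - cx`. -/
def garnierChartNumerator (κ0 κ1 θ1 θ2 c t s x y z w : R) : R :=
  (x - t * (x * z - 1)) * garnierResidual κ0 κ1 θ1 θ2 c t s
      1 z (c + z * (x ^ 2 * y - w - c * x)) (x ^ 2 * y - w - c * x) -
    (1 - t * z) * garnierResidual κ0 κ1 θ1 θ2 c t s
      x (x * z - 1) (c * z - y * (x * z - 1)) (c - x * y)

theorem map_garnierChartNumerator (f : R →+* S) (κ0 κ1 θ1 θ2 c t s x y z w : R) :
    f (garnierChartNumerator κ0 κ1 θ1 θ2 c t s x y z w) =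
      garnierChartNumerator (f κ0) (f κ1) (f θ1) (f θ2) (f c) (f t) (f s)
        (f x) (f y) (f z) (f w) := by
  simp [garnierChartNumerator, garnierResidual, cubicTail, quadraticTail]

end CommRing

/-- `X, Z, a, n` are blow-up coordinates of the point `(q, p)`: the exceptional curve `Z = 0` lies
over `q = ∞` and `q p = c`. -/
structure IsBlowupCoordinates (c q p X Z a n : ℂ) : Prop where
  Z_ne_zero : Z ≠ 0
  q_eq : q = X / Z
  p_eq : p = Z * a
  X_mul_a : X * a = c + Z * n

theorem mul_garnierB_eq_garnierNumerator_div (κ0 κ1 κinf θ1 θ2 : ℂ) {t s q X Z : ℂ} (a : ℂ)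
    (hZ : Z ≠ 0) (hq : q = X / Z) (h0 : q ≠ 0) (h1 : q ≠ 1) (ht : q ≠ t) (hs : q ≠ s) :
    q * (q - 1) * (q - t) * (q - s) * garnierB κ0 κ1 κinf θ1 θ2 t s q (Z * a) =
      garnierNumerator κ0 κ1 θ1 θ2 (((κ0 + κ1 + θ1 + θ2 - 1) ^ 2 - κinf ^ 2) / 4) t s X Z a /
        Z ^ 2 := by
  have hX : X = q * Z := by rw [hq, div_mul_cancel₀ X hZ]
  have h1' : q - 1 ≠ 0 := sub_ne_zero.mpr h1
  have ht' : q - t ≠ 0 := sub_ne_zero.mpr ht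
  have hs' : q - s ≠ 0 := sub_ne_zero.mpr hs
  rw [hX]
  unfold garnierB garnierNumerator
  field_simp
  ring

namespace IsBlowupCoordinates

variable {κ0 κ1 κinf θ1 θ2 c t s : ℂ}

theorem mul_garnierB {q p X Z a n : ℂ} (h : IsBlowupCoordinates c q p X Z a n)
    (hc : c = (κ0 + κ1 - κinf + θ1 + θ2 - 1) / 2)
    (h0 : q ≠ 0) (h1 : q ≠ 1) (ht : q ≠ t) (hs : q ≠ s) :
    q * (q - 1) * (q - t) * (q - s) * garnierB κ0 κ1 κinf θ1 θ2 t s q p =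
      garnierResidual κ0 κ1 θ1 θ2 c t s X Z a n / Z := by
  have hκ : ((κ0 + κ1 + θ1 + θ2 - 1) ^ 2 - κinf ^ 2) / 4 =
      c * (κ0 + κ1 + θ1 + θ2 - 1 - c) := by
    rw [hc]
    ring
  rw [h.p_eq,
    mul_garnierB_eq_garnierNumerator_div κ0 κ1 κinf θ1 θ2 a h.Z_ne_zero h.q_eq h0 h1 ht hs, hκ,
    garnierNumerator_eq_mul_garnierResidual κ0 κ1 θ1 θ2 c t s h.X_mul_a, sq,
    mul_div_mul_left _ _ h.Z_ne_zero]

theorem garnierH1_eq {q1 p1 X1 Z1 a1 n1 q2 p2 X2 Z2 a2 n2 : ℂ}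
    (h : IsBlowupCoordinates c q1 p1 X1 Z1 a1 n1) (h' : IsBlowupCoordinates c q2 p2 X2 Z2 a2 n2)
    (hc : c = (κ0 + κ1 - κinf + θ1 + θ2 - 1) / 2)
    (hq1_0 : q1 ≠ 0) (hq1_1 : q1 ≠ 1) (hq1_t : q1 ≠ t) (hq1_s : q1 ≠ s)
    (hq2_0 : q2 ≠ 0) (hq2_1 : q2 ≠ 1) (hq2_t : q2 ≠ t) (hq2_s : q2 ≠ s) :
    garnierH1 κ0 κ1 κinf θ1 θ2 q1 p1 q2 p2 t s =
      ((X1 - t * Z1) * garnierResidual κ0 κ1 θ1 θ2 c t s X2 Z2 a2 n2 -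
        (X2 - t * Z2) * garnierResidual κ0 κ1 θ1 θ2 c t s X1 Z1 a1 n1) /
      ((X1 * Z2 - X2 * Z1) * (t * (t - 1) * (t - s))) := by
  have hZ1 := h.Z_ne_zero
  have hZ2 := h'.Z_ne_zero
  have hsub : q1 - q2 = (X1 * Z2 - X2 * Z1) / (Z1 * Z2) := by
    rw [h.q_eq, h'.q_eq, div_sub_div _ _ hZ1 hZ2, mul_comm Z1 X2]
  have hq1t : q1 - t = (X1 - t * Z1) / Z1 := by rw [h.q_eq]; field_simp
  have hq2t : q2 - t = (X2 - t * Z2) / Z2 := by rw [h'.q_eq]; field_simp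
  calc garnierH1 κ0 κ1 κinf θ1 θ2 q1 p1 q2 p2 t s
      = ((q1 - t) * (q2 * (q2 - 1) * (q2 - t) * (q2 - s) *
            garnierB κ0 κ1 κinf θ1 θ2 t s q2 p2) -
          (q2 - t) * (q1 * (q1 - 1) * (q1 - t) * (q1 - s) *
            garnierB κ0 κ1 κinf θ1 θ2 t s q1 p1)) /
        (q1 - q2) / (t * (t - 1) * (t - s)) := by
        rw [garnierH1, ← neg_sub q1 q2]
        simp only [div_eq_mul_inv, mul_inv, inv_neg]
        ring
    _ = _ := by
        rw [h.mul_garnierB hc hq1_0 hq1_1 hq1_t hq1_s,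
          h'.mul_garnierB hc hq2_0 hq2_1 hq2_t hq2_s, hsub, hq1t, hq2t]
        field_simp

end IsBlowupCoordinates

section ChartR2

variable {q1 p1 q2 p2 x y z w : ℂ}

theorem isBlowupCoordinates_psi_fst (c : ℂ) (hq1 : q1 ≠ 0) (hq2 : q2 ≠ 0)
    (hx : x = (q1 * q2 + 1) * q2) (hy : y = p1 / q2 ^ 2) (hz : z = 1 / q2) :
    IsBlowupCoordinates c (q2 + 1 / q1) (q1 * (c - p1 * q1))
      x (x * z - 1) (c * z - y * (x * z - 1)) (c - x * y) := by
  have hu : x * z - 1 = q1 * q2 := by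
    rw [hx, hz]
    field_simp
    ring
  refine ⟨hu ▸ mul_ne_zero hq1 hq2, ?_, ?_, by ring⟩
  · rw [hu, hx]
    field_simp
  · rw [hu, hy, hz]
    field_simp

theorem isBlowupCoordinates_psi_snd (c : ℂ) (hq2 : q2 ≠ 0)
    (hx : x = (q1 * q2 + 1) * q2) (hy : y = p1 / q2 ^ 2) (hz : z = 1 / q2)
    (hw : w = -(q2 * p2 - 2 * (q1 * q2 + 1 / 2) * p1 / q2) * q2) :
    IsBlowupCoordinates c q2 (p2 - q1 * (c - p1 * q1))
      1 z (c + z * (x ^ 2 * y - w - c * x)) (x ^ 2 * y - w - c * x) := by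
  refine ⟨hz ▸ one_div_ne_zero hq2, by rw [hz, one_div_one_div], ?_, one_mul _⟩
  rw [hx, hy, hz, hw]
  field_simp
  ring

end ChartR2

open MvPolynomial in
/-- The Hamiltonian `H1 ∘ ψ` as a polynomial in the coordinates of the chart `r2`. -/
noncomputable def garnierChartPolynomial (κ0 κ1 θ1 θ2 c t s : ℂ) : MvPolynomial (Fin 4) ℂ :=
  C (t * (t - 1) * (t - s))⁻¹ *
    garnierChartNumerator (C κ0) (C κ1) (C θ1) (C θ2) (C c) (C t) (C s) (X 0) (X 1) (X 2) (X 3)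

theorem eval_garnierChartPolynomial (κ0 κ1 θ1 θ2 c t s x y z w : ℂ) :
    MvPolynomial.eval ![x, y, z, w] (garnierChartPolynomial κ0 κ1 θ1 θ2 c t s) =
      garnierChartNumerator κ0 κ1 θ1 θ2 c t s x y z w / (t * (t - 1) * (t - s)) := by
  simp [garnierChartPolynomial, map_garnierChartNumerator, div_eq_inv_mul]

/-- Holomorphy in the chart `r2`: the polynomial Hamiltonian obtained from `H1`
by φ1 becomes again polynomial in the coordinates
`(x2,y2,z2,w2) = ((q1q2+1)q2, p1/q2², 1/q2, -(q2·p2 - 2(q1q2+1/2)·p1/q2)·q2)`. -/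
theorem garnierH1_chart_r2 (κ0 κ1 κinf θ1 θ2 t s : ℂ)
    (ht0 : t ≠ 0) (ht1 : t ≠ 1) (hs0 : s ≠ 0) (hs1 : s ≠ 1) (hts : t ≠ s) :
    ∃ P : MvPolynomial (Fin 4) ℂ, ∀ q1 p1 q2 p2 : ℂ,
      q1 ≠ 0 → q2 ≠ 0 → q2 ≠ 1 → q2 ≠ t → q2 ≠ s →
      q2 + 1 / q1 ≠ 0 → q2 + 1 / q1 ≠ 1 → q2 + 1 / q1 ≠ t → q2 + 1 / q1 ≠ s →
      garnierH1' κ0 κ1 κinf θ1 θ2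
          (psi ((κ0 + κ1 - κinf + θ1 + θ2 - 1) / 2) (q1, p1, q2, p2)) t s =
        MvPolynomial.eval
          ![(q1 * q2 + 1) * q2, p1 / q2 ^ 2, 1 / q2,
            -(q2 * p2 - 2 * (q1 * q2 + 1 / 2) * p1 / q2) * q2] P := by
  refine ⟨garnierChartPolynomial κ0 κ1 θ1 θ2 ((κ0 + κ1 - κinf + θ1 + θ2 - 1) / 2) t s, ?_⟩
  intro q1 p1 q2 p2 hq1 hq2_0 hq2_1 hq2_t hq2_s hQ_0 hQ_1 hQ_t hQ_s
  have hfst := isBlowupCoordinates_psi_fst (p1 := p1) ((κ0 + κ1 - κinf + θ1 + θ2 - 1) / 2)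
    hq1 hq2_0 rfl rfl rfl
  have hsnd := isBlowupCoordinates_psi_snd (q1 := q1) (p1 := p1) (p2 := p2)
    ((κ0 + κ1 - κinf + θ1 + θ2 - 1) / 2) hq2_0 rfl rfl rfl rfl
  have hdet (x z : ℂ) : x * z - 1 * (x * z - 1) = 1 := by ring
  rw [eval_garnierChartPolynomial, garnierChartNumerator, garnierH1', psi,
    hfst.garnierH1_eq hsnd rfl hQ_0 hQ_1 hQ_t hQ_s hq2_0 hq2_1 hq2_t hq2_s, hdet, one_mul]
end

section
/- Holomorphy in the chart r3: fix t, s ∈ ℂ with t, s ∉ {0,1} and t ≠ s; then there exists a polynomial P in four variables with complex coefficients such that for all complex (q1,p1,q2,p2) with q1 ≠ 0, p1 ≠ 0, q2 ∉ {0,1,t,s} and q2 + 1/q1 ∉ {0,1,t,s}, one has H1(ψ(q1,p1,q2,p2), t, s) = P(−(q1·p1 + κ∞)·p1, 1/p1, q2, p2). That is, the polynomial Hamiltonian obtained from H1 by φ1 becomes again polynomial in the coordinates (x3,y3,z3,w3) = (−(q1p1+κ∞)p1, 1/p1, q2, p2). -/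
/-!
Multiplying `B(q, p)` by `q (q - 1) (q - t) (q - s)` and homogenizing in `q` gives a form
`A(q, h, p)` with `A(l q, l h, p) = l² A(q, h, l p)`. Under `ψ`, with `n = c - q₁ p₁`, the only
term of `H1` with a pole at `q₁ = 0` is therefore `A(q₁ q₂ + 1, q₁, n) / q₁`. Modulo `q₁` its
numerator is `A(1, 0, n) = (n - c) (n - c - κ∞)`, whose roots are the exponents at `q = ∞`, and in
the chart `r3` this product is exactly `-q₁ x₃`. Hence the numerator is divisible by `q₁` as a
polynomial in the chart coordinates.
-/

section GarnierForm

variable {R S : Type*} [CommRing R] [CommRing S]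

/-- The form `q (q - 1) (q - t) (q - s) B(q, p)`, homogenized in `q` by the variable `h`, so that
`h = 1` gives back the affine form and `h = 0` is the fibre over `q = ∞`. The constant `κ` is a
free parameter, so that the form makes sense over any commutative ring. -/
def garnierForm (κ κ0 κ1 θ1 θ2 t s q h p : R) : R :=
  q * (q - h) * (q - t * h) * (q - s * h) * p ^ 2 + κ * (q - t * h) * (q - s * h) -
    ((θ1 - 1) * q * (q - h) * (q - s * h) + θ2 * q * (q - h) * (q - t * h) +
      κ0 * (q - h) * (q - t * h) * (q - s * h) + κ1 * q * (q - t * h) * (q - s * h)) * p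

lemma map_garnierForm (f : R →+* S) (κ κ0 κ1 θ1 θ2 t s q h p : R) :
    f (garnierForm κ κ0 κ1 θ1 θ2 t s q h p) =
      garnierForm (f κ) (f κ0) (f κ1) (f θ1) (f θ2) (f t) (f s) (f q) (f h) (f p) := by
  simp only [garnierForm, map_add, map_sub, map_mul, map_pow, map_one]

lemma garnierForm_mul_mul (κ κ0 κ1 θ1 θ2 t s l q h p : R) :
    garnierForm κ κ0 κ1 θ1 θ2 t s (l * q) (l * h) p =
      l ^ 2 * garnierForm κ κ0 κ1 θ1 θ2 t s q h (l * p) := by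
  unfold garnierForm
  ring

lemma garnierForm_one_zero {κ κ0 κ1 θ1 θ2 c κinf : R} (t s p : R)
    (hκ : κ = c * (c + κinf)) (hc : κ0 + κ1 + θ1 + θ2 - 1 = 2 * c + κinf) :
    garnierForm κ κ0 κ1 θ1 θ2 t s 1 0 p = (p - c) * (p - c - κinf) := by
  unfold garnierForm
  linear_combination hκ - p * hc

lemma dvd_garnierForm_sub_garnierForm_one_zero (κ κ0 κ1 θ1 θ2 t s h z p : R) :
    h ∣ garnierForm κ κ0 κ1 θ1 θ2 t s (h * z + 1) h p -
      garnierForm κ κ0 κ1 θ1 θ2 t s 1 0 p := by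
  have hh : Ideal.Quotient.mk (Ideal.span {h}) h = 0 :=
    Ideal.Quotient.eq_zero_iff_mem.mpr (Ideal.mem_span_singleton_self h)
  rw [← Ideal.mem_span_singleton, ← Ideal.Quotient.mk_eq_mk_iff_sub_mem, map_garnierForm,
    map_garnierForm]
  simp only [map_add, map_mul, map_one, map_zero, hh, zero_mul, zero_add]

/-- The numerator `q₁ t (t - 1) (t - s) (H1 ∘ ψ)`, written in `Q = q₁`, `n = c - p₁ q₁`, `z = q₂`
and `w = p₂`. -/
def psiNumerator (κ κ0 κ1 θ1 θ2 t s Q n z w : R) : R :=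
  Q * (Q * (z - t) + 1) * garnierForm κ κ0 κ1 θ1 θ2 t s z 1 (w - Q * n) -
    (z - t) * garnierForm κ κ0 κ1 θ1 θ2 t s (Q * z + 1) Q n

lemma map_psiNumerator (f : R →+* S) (κ κ0 κ1 θ1 θ2 t s Q n z w : R) :
    f (psiNumerator κ κ0 κ1 θ1 θ2 t s Q n z w) =
      psiNumerator (f κ) (f κ0) (f κ1) (f θ1) (f θ2) (f t) (f s) (f Q) (f n) (f z) (f w) := by
  simp only [psiNumerator, map_garnierForm, map_add, map_sub, map_mul, map_one]

lemma dvd_psiNumerator {κ κ0 κ1 θ1 θ2 c κinf : R} (t s z w : R) {Q n : R}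
    (hκ : κ = c * (c + κinf)) (hc : κ0 + κ1 + θ1 + θ2 - 1 = 2 * c + κinf)
    (hQ : Q ∣ (n - c) * (n - c - κinf)) :
    Q ∣ psiNumerator κ κ0 κ1 θ1 θ2 t s Q n z w := by
  have dvd_at_infinity : Q ∣ garnierForm κ κ0 κ1 θ1 θ2 t s 1 0 n := by
    rwa [garnierForm_one_zero t s n hκ hc]
  have dvd_form : Q ∣ garnierForm κ κ0 κ1 θ1 θ2 t s (Q * z + 1) Q n :=
    (dvd_iff_dvd_of_dvd_sub
      (dvd_garnierForm_sub_garnierForm_one_zero κ κ0 κ1 θ1 θ2 t s Q z n)).mpr dvd_at_infinity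
  exact dvd_sub ((dvd_mul_right Q _).mul_right _) (dvd_form.mul_left _)

open MvPolynomial in
lemma exists_psiNumerator_eq_mul_eval {κ κ0 κ1 θ1 θ2 c κinf : R} (t s : R)
    (hκ : κ = c * (c + κinf)) (hc : κ0 + κ1 + θ1 + θ2 - 1 = 2 * c + κinf) :
    ∃ N : MvPolynomial (Fin 4) R, ∀ x y z w : R,
      psiNumerator κ κ0 κ1 θ1 θ2 t s (-(x * y + κinf) * y) (c + (x * y + κinf)) z w =
        -(x * y + κinf) * y * eval ![x, y, z, w] N := by
  have hκC : (C κ : MvPolynomial (Fin 4) R) = C c * (C c + C κinf) := by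
    rw [hκ, C_mul, C_add]
  have hcC : (C κ0 + C κ1 + C θ1 + C θ2 - 1 : MvPolynomial (Fin 4) R) = 2 * C c + C κinf := by
    simpa only [map_add, map_sub, map_mul, map_one, map_ofNat] using
      congrArg (C : R →+* MvPolynomial (Fin 4) R) hc
  let m : MvPolynomial (Fin 4) R := X 0 * X 1 + C κinf
  have dvd_exponents : -m * X 1 ∣ (C c + m - C c) * (C c + m - C c - C κinf) :=
    ⟨-X 0, by ring⟩
  obtain ⟨N, hN⟩ := dvd_psiNumerator (C t) (C s) (X 2) (X 3) hκC hcC dvd_exponents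
  refine ⟨N, fun x y z w => ?_⟩
  simpa [m, map_psiNumerator] using congrArg (eval ![x, y, z, w]) hN

end GarnierForm

/-- The constant `κ = ((κ0 + κ1 + θ1 + θ2 - 1)² - κ∞²) / 4` of `garnierB`. -/
noncomputable def garnierKappa (κ0 κ1 κinf θ1 θ2 : ℂ) : ℂ :=
  ((κ0 + κ1 + θ1 + θ2 - 1) ^ 2 - κinf ^ 2) / 4

section Hamiltonian

variable (κ0 κ1 κinf θ1 θ2 t s : ℂ)

lemma mul_garnierB_eq_garnierForm {q : ℂ} (p : ℂ)
    (h0 : q ≠ 0) (h1 : q ≠ 1) (ht : q ≠ t) (hs : q ≠ s) :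
    q * (q - 1) * (q - t) * (q - s) * garnierB κ0 κ1 κinf θ1 θ2 t s q p =
      garnierForm (garnierKappa κ0 κ1 κinf θ1 θ2) κ0 κ1 θ1 θ2 t s q 1 p := by
  have h1' := sub_ne_zero.mpr h1
  have ht' := sub_ne_zero.mpr ht
  have hs' := sub_ne_zero.mpr hs
  unfold garnierB garnierForm garnierKappa
  field_simp

lemma garnierH1_eq_garnierForm {q1 q2 : ℂ} (p1 p2 : ℂ)
    (h10 : q1 ≠ 0) (h11 : q1 ≠ 1) (h1t : q1 ≠ t) (h1s : q1 ≠ s)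
    (h20 : q2 ≠ 0) (h21 : q2 ≠ 1) (h2t : q2 ≠ t) (h2s : q2 ≠ s) :
    garnierH1 κ0 κ1 κinf θ1 θ2 q1 p1 q2 p2 t s =
      (t * (t - 1) * (t - s))⁻¹ * ((q1 - q2)⁻¹ *
        ((q1 - t) * garnierForm (garnierKappa κ0 κ1 κinf θ1 θ2)
            κ0 κ1 θ1 θ2 t s q2 1 p2 -
          (q2 - t) * garnierForm (garnierKappa κ0 κ1 κinf θ1 θ2)
            κ0 κ1 θ1 θ2 t s q1 1 p1)) := by
  rw [← mul_garnierB_eq_garnierForm κ0 κ1 κinf θ1 θ2 t s p1 h10 h11 h1t h1s,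
    ← mul_garnierB_eq_garnierForm κ0 κ1 κinf θ1 θ2 t s p2 h20 h21 h2t h2s, garnierH1,
    ← neg_sub q1 q2]
  simp only [div_eq_mul_inv, mul_inv, inv_neg, neg_mul]
  ring

lemma garnierH1'_psi_eq_psiNumerator (c p1 p2 : ℂ) {q1 q2 : ℂ} (hq1 : q1 ≠ 0)
    (h10 : q2 + 1 / q1 ≠ 0) (h11 : q2 + 1 / q1 ≠ 1) (h1t : q2 + 1 / q1 ≠ t)
    (h1s : q2 + 1 / q1 ≠ s) (h20 : q2 ≠ 0) (h21 : q2 ≠ 1) (h2t : q2 ≠ t) (h2s : q2 ≠ s) :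
    garnierH1' κ0 κ1 κinf θ1 θ2 (psi c (q1, p1, q2, p2)) t s =
      (t * (t - 1) * (t - s))⁻¹ * (psiNumerator (garnierKappa κ0 κ1 κinf θ1 θ2)
        κ0 κ1 θ1 θ2 t s q1 (c - p1 * q1) q2 p2 / q1) := by
  have rescale := garnierForm_mul_mul (garnierKappa κ0 κ1 κinf θ1 θ2)
    κ0 κ1 θ1 θ2 t s q1 (q2 + 1 / q1) 1 (c - p1 * q1)
  rw [mul_add, mul_one_div_cancel hq1, mul_one] at rescale
  simp only [garnierH1', psi]
  rw [garnierH1_eq_garnierForm κ0 κ1 κinf θ1 θ2 t s _ _ h10 h11 h1t h1s h20 h21 h2t h2s,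
    psiNumerator, rescale, add_sub_cancel_left]
  field_simp
  ring

end Hamiltonian

/-- Holomorphy in the chart `r3`: the polynomial Hamiltonian obtained from `H1`
by φ1 becomes again polynomial in the coordinates
`(x3,y3,z3,w3) = (-(q1·p1 + κ∞)·p1, 1/p1, q2, p2)`. -/
theorem garnierH1_chart_r3 (κ0 κ1 κinf θ1 θ2 t s : ℂ)
    (ht0 : t ≠ 0) (ht1 : t ≠ 1) (hs0 : s ≠ 0) (hs1 : s ≠ 1) (hts : t ≠ s) :
    ∃ P : MvPolynomial (Fin 4) ℂ, ∀ q1 p1 q2 p2 : ℂ,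
      q1 ≠ 0 → p1 ≠ 0 → q2 ≠ 0 → q2 ≠ 1 → q2 ≠ t → q2 ≠ s →
      q2 + 1 / q1 ≠ 0 → q2 + 1 / q1 ≠ 1 → q2 + 1 / q1 ≠ t → q2 + 1 / q1 ≠ s →
      garnierH1' κ0 κ1 κinf θ1 θ2
          (psi ((κ0 + κ1 - κinf + θ1 + θ2 - 1) / 2) (q1, p1, q2, p2)) t s =
        MvPolynomial.eval ![-(q1 * p1 + κinf) * p1, 1 / p1, q2, p2] P := by
  set c : ℂ := (κ0 + κ1 - κinf + θ1 + θ2 - 1) / 2 with hc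
  have hκ : garnierKappa κ0 κ1 κinf θ1 θ2 = c * (c + κinf) := by rw [garnierKappa, hc]; ring
  have hsum : κ0 + κ1 + θ1 + θ2 - 1 = 2 * c + κinf := by rw [hc]; ring
  obtain ⟨N, hN⟩ := exists_psiNumerator_eq_mul_eval t s hκ hsum
  refine ⟨MvPolynomial.C (t * (t - 1) * (t - s))⁻¹ * N, ?_⟩
  intro q1 p1 q2 p2 hq1 hp1 h20 h21 h2t h2s h10 h11 h1t h1s
  have hxy : -(q1 * p1 + κinf) * p1 * (1 / p1) + κinf = -(p1 * q1) := by field_simp; ring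
  have hQ : -(-(p1 * q1)) * (1 / p1) = q1 := by field_simp
  have numerator_eq := hN (-(q1 * p1 + κinf) * p1) (1 / p1) q2 p2
  rw [hxy, hQ, ← sub_eq_add_neg] at numerator_eq
  rw [garnierH1'_psi_eq_psiNumerator κ0 κ1 κinf θ1 θ2 t s c p1 p2 hq1 h10 h11 h1t h1s
    h20 h21 h2t h2s, numerator_eq, mul_div_cancel_left₀ _ hq1, map_mul, MvPolynomial.eval_C]
end
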